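/- Assume not all w_j are zero. Let b, b' > 0 and c, c' ∈ ℝ, and let (a_u)_{u ∈ δ∩ℤ^n} and (a'_u)_{u ∈ δ∩ℤ^n} be families of elements of K with ord(a_u) ≥ b·w(u) + c and ord(a'_u) ≥ b'·w(u) + c' for all u. Then for every u ∈ δ∩ℤ^n, the family of products (a_v · a'_{u−v}), indexed by the set of v ∈ δ∩ℤ^n with u − v ∈ δ∩ℤ^n, is summable in K, and its sum A_u satisfies ord(A_u) ≥ min(b, b')·w(u) + c + c'. (That is, the product of a series in L(b,c) and a series in L(b',c') is well-defined and lies in L(min(b,b'), c+c').) -/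

import Mathlib

/-!
The weight is nonnegative and, on the cone `δ`, subadditive, because `sΔ + tΔ = (s + t)Δ` for the
convex set `Δ` and `s, t ≥ 0` (`weight_add_le`). Hence every term `a v * a' (u - v)` has valuation
at least `b w(v) + c + b' w(u - v) + c' ≥ min b b' * w(u) + c + c'`, and the ultrametric inequality
passes this bound to the sum.

The family may be infinite, when the cone contains a line. As `Δ` is bounded, `w(v)` is bounded
below on the cone by a positive multiple of `‖v‖` (`exists_norm_le_mul_weight`), so `w(v) → ∞` along
the cofinite filter (`tendsto_weight_cofinite`). The terms therefore tend to `0`, which in a complete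
nonarchimedean field gives summability.
-/

open Pointwise

/-- The real vector associated to an integer lattice vector. -/
def intToReal (n : ℕ) (u : Fin n → ℤ) : Fin n → ℝ := fun i => (u i : ℝ)

/-- The convex cone `δ` generated by `w₁, …, w_N`. -/
def deltaCone (n N : ℕ) (w : Fin N → Fin n → ℤ) : Set (Fin n → ℝ) :=
  {x | ∃ c : Fin N → ℝ, (∀ j, 0 ≤ c j) ∧ x = ∑ j, c j • intToReal n (w j)}

/-- The Newton polyhedron `Δ`: the convex hull of `{w₁, …, w_N} ∪ {0}`. -/
def newtonPolyhedron (n N : ℕ) (w : Fin N → Fin n → ℤ) : Set (Fin n → ℝ) :=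
  convexHull ℝ (insert 0 (Set.range fun j => intToReal n (w j)))

/-- The weight function `w(u) = inf {c : 0 ≤ c ∧ u ∈ c • Δ}`. -/
noncomputable def weight (n N : ℕ) (w : Fin N → Fin n → ℤ) (u : Fin n → ℝ) : ℝ :=
  sInf {c : ℝ | 0 ≤ c ∧ u ∈ c • newtonPolyhedron n N w}

/-- The set `S` of lattice points of the form `∑ rⱼ wⱼ` with `0 ≤ rⱼ ≤ 1`. -/
def latticeS (n N : ℕ) (w : Fin N → Fin n → ℤ) : Set (Fin n → ℤ) :=
  {s | ∃ r : Fin N → ℝ, (∀ j, 0 ≤ r j ∧ r j ≤ 1) ∧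
    intToReal n s = ∑ j, r j • intToReal n (w j)}

open scoped Classical

/-- The additive valuation `ord x = -log_p ‖x‖`, with `ord 0 = +∞`, valued in `EReal`. -/
noncomputable def ord (p : ℕ) {K : Type*} [NormedField K] (x : K) : EReal :=
  if x = 0 then ⊤ else ((-Real.logb p ‖x‖ : ℝ) : EReal)

/-- The partial sum `γ_l = ∑_{i=0}^l γ^{p^i} / p^i`. -/
noncomputable def gammaPartial (p : ℕ) {K : Type*} [NormedField K] (γ : K) (l : ℕ) : K :=
  ∑ i ∈ Finset.range (l + 1), γ ^ p ^ i / (p : K) ^ i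

lemma zero_mem_newtonPolyhedron (n N : ℕ) (w : Fin N → Fin n → ℤ) :
    (0 : Fin n → ℝ) ∈ newtonPolyhedron n N w :=
  subset_convexHull ℝ _ (Set.mem_insert _ _)

lemma convex_newtonPolyhedron (n N : ℕ) (w : Fin N → Fin n → ℤ) :
    Convex ℝ (newtonPolyhedron n N w) :=
  convex_convexHull ℝ _

/-- If `x = ∑ j, r j • w j` with `r j ≥ 0`, then `x ∈ (∑ j, r j) • Δ`: each `r j • w j` lies in
`r j • Δ`, and dilates of a convex set add up. So the infimum defining `weight` is over a
nonempty set. -/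
lemma exists_mem_smul_newtonPolyhedron {n N : ℕ} {w : Fin N → Fin n → ℤ} {x : Fin n → ℝ}
    (hx : x ∈ deltaCone n N w) :
    {c : ℝ | 0 ≤ c ∧ x ∈ c • newtonPolyhedron n N w}.Nonempty := by
  obtain ⟨r, hr, rfl⟩ := hx
  have key : ∀ s : Finset (Fin N),
      ∑ j ∈ s, r j • intToReal n (w j) ∈ (∑ j ∈ s, r j) • newtonPolyhedron n N w := by
    intro s
    induction s using Finset.induction_on with
    | empty => exact ⟨0, zero_mem_newtonPolyhedron n N w, by simp⟩
    | insert j s hj ih =>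
      rw [Finset.sum_insert hj, Finset.sum_insert hj,
        (convex_newtonPolyhedron n N w).add_smul (hr j) (Finset.sum_nonneg fun i _ => hr i)]
      exact Set.add_mem_add
        ⟨_, subset_convexHull ℝ _ (Set.mem_insert_of_mem _ ⟨j, rfl⟩), rfl⟩ ih
  exact ⟨∑ j, r j, Finset.sum_nonneg fun i _ => hr i, key _⟩

lemma weight_nonneg (n N : ℕ) (w : Fin N → Fin n → ℤ) (x : Fin n → ℝ) :
    0 ≤ weight n N w x :=
  Real.sInf_nonneg fun _ hc => hc.1

/-- Membership in the cone matters: off the cone the infimum is over the empty set and `weight`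
takes the junk value `0`. -/
lemma weight_add_le {n N : ℕ} {w : Fin N → Fin n → ℤ} {x y : Fin n → ℝ}
    (hx : x ∈ deltaCone n N w) (hy : y ∈ deltaCone n N w) :
    weight n N w (x + y) ≤ weight n N w x + weight n N w y := by
  have hbdd : ∀ z, BddBelow {c : ℝ | 0 ≤ c ∧ z ∈ c • newtonPolyhedron n N w} :=
    fun z => ⟨0, fun c hc => hc.1⟩
  unfold weight
  rw [← csInf_add (exists_mem_smul_newtonPolyhedron hx) (hbdd x)
    (exists_mem_smul_newtonPolyhedron hy) (hbdd y)]
  refine csInf_le_csInf (hbdd _) ((exists_mem_smul_newtonPolyhedron hx).add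
    (exists_mem_smul_newtonPolyhedron hy)) ?_
  rintro _ ⟨s, ⟨hs, hxs⟩, t, ⟨ht, hyt⟩, rfl⟩
  refine ⟨add_nonneg hs ht, ?_⟩
  rw [(convex_newtonPolyhedron n N w).add_smul hs ht]
  exact Set.add_mem_add hxs hyt

/-- Since `Δ` is bounded, the weight controls the norm on the cone. -/
lemma exists_norm_le_mul_weight (n N : ℕ) (w : Fin N → Fin n → ℤ) :
    ∃ R : ℝ, 0 < R ∧ ∀ x ∈ deltaCone n N w, ‖x‖ ≤ R * weight n N w x := by
  have hb : Bornology.IsBounded (newtonPolyhedron n N w) :=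
    isBounded_convexHull.2 ((Set.finite_range _).insert 0).isBounded
  obtain ⟨R, hR, hΔ⟩ := hb.exists_pos_norm_le
  refine ⟨R, hR, fun x hx => ?_⟩
  rw [← div_le_iff₀' hR]
  refine le_csInf (exists_mem_smul_newtonPolyhedron hx) ?_
  rintro s ⟨hs, y, hy, rfl⟩
  rw [div_le_iff₀' hR]
  simp only [norm_smul, Real.norm_of_nonneg hs]
  nlinarith [hΔ y hy]

lemma tendsto_norm_intToReal_cofinite (n : ℕ) :
    Filter.Tendsto (fun v : Fin n → ℤ => ‖intToReal n v‖) Filter.cofinite Filter.atTop := by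
  have h := tendsto_norm_cocompact_atTop (E := Fin n → ℤ)
  rw [Filter.cocompact_eq_cofinite] at h
  refine h.congr fun v => ?_
  simp [Pi.norm_def, intToReal, nnnorm, Int.norm_eq_abs]

/-- Only finitely many lattice points of the cone have bounded weight. -/
lemma tendsto_weight_cofinite (n N : ℕ) (w : Fin N → Fin n → ℤ) (P : (Fin n → ℤ) → Prop)
    (hP : ∀ v, P v → intToReal n v ∈ deltaCone n N w) :
    Filter.Tendsto (fun v : {v : Fin n → ℤ // P v} => weight n N w (intToReal n v.1))
      Filter.cofinite Filter.atTop := by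
  obtain ⟨R, hR, h⟩ := exists_norm_le_mul_weight n N w
  refine Filter.tendsto_atTop_mono (fun v => (div_le_iff₀' hR).2 (h _ (hP _ v.2))) ?_
  exact ((tendsto_norm_intToReal_cofinite n).comp
    Subtype.val_injective.tendsto_cofinite).atTop_div_const hR

lemma le_ord_iff {p : ℕ} (hp : p.Prime) {K : Type*} [NormedField K] (x : K) (r : ℝ) :
    (r : EReal) ≤ ord p x ↔ ‖x‖ ≤ (p : ℝ) ^ (-r) := by
  have hp1 : (1 : ℝ) < p := by exact_mod_cast hp.one_lt
  unfold ord
  split_ifs with h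
  · simp only [h, le_top, norm_zero, true_iff]
    positivity
  · rw [EReal.coe_le_coe_iff, ← Real.logb_le_iff_le_rpow hp1 (norm_pos_iff.2 h), le_neg]

/-- the product of a series in `L(b, c)` and a series in `L(b', c')`
is well-defined and lies in `L(min(b,b'), c+c')`: for every `u ∈ δ ∩ ℤ^n`, the
family of products `a_v · a'_{u-v}`, over `v ∈ δ ∩ ℤ^n` with `u - v ∈ δ ∩ ℤ^n`,
is summable in `K`, with sum `A_u` satisfying
`ord(A_u) ≥ min(b,b')·w(u) + c + c'`. -/
theorem mul_mem_L (p : ℕ) (hp : p.Prime)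
    {K : Type*} [NormedField K] [CompleteSpace K]
    (hna : ∀ x y : K, ‖x + y‖ ≤ max ‖x‖ ‖y‖)
    (hpnorm : ‖(p : K)‖ = (p : ℝ)⁻¹)
    (n N : ℕ) (hn : 1 ≤ n) (w : Fin N → Fin n → ℤ) (hw : ∃ j, w j ≠ 0)
    (b b' c c' : ℝ) (hb : 0 < b) (hb' : 0 < b')
    (a a' : (Fin n → ℤ) → K)
    (ha : ∀ u : Fin n → ℤ, intToReal n u ∈ deltaCone n N w →
      ((b * weight n N w (intToReal n u) + c : ℝ) : EReal) ≤ ord p (a u))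
    (ha' : ∀ u : Fin n → ℤ, intToReal n u ∈ deltaCone n N w →
      ((b' * weight n N w (intToReal n u) + c' : ℝ) : EReal) ≤ ord p (a' u))
    (u : Fin n → ℤ) (hu : intToReal n u ∈ deltaCone n N w) :
    ∃ A : K,
      HasSum (fun v : {v : Fin n → ℤ //
          intToReal n v ∈ deltaCone n N w ∧ intToReal n (u - v) ∈ deltaCone n N w} =>
        a v.1 * a' (u - v.1)) A ∧
      ((min b b' * weight n N w (intToReal n u) + c + c' : ℝ) : EReal) ≤ ord p A := by
  have hp1 : (1 : ℝ) < p := by exact_mod_cast hp.one_lt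
  have hp0 : (0 : ℝ) < p := by linarith
  have : IsUltrametricDist K :=
    IsUltrametricDist.isUltrametricDist_of_forall_norm_add_le_max_norm hna
  simp only [le_ord_iff hp] at ha ha' ⊢
  set I := {v : Fin n → ℤ //
    intToReal n v ∈ deltaCone n N w ∧ intToReal n (u - v) ∈ deltaCone n N w}
  have hterm : ∀ v : I, ‖a v.1 * a' (u - v.1)‖ ≤
      (p : ℝ) ^ (-(b * weight n N w (intToReal n v.1) + c
        + (b' * weight n N w (intToReal n (u - v.1)) + c'))) := by
    intro v
    rw [norm_mul, neg_add, Real.rpow_add hp0]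
    exact mul_le_mul (ha _ v.2.1) (ha' _ v.2.2) (norm_nonneg _) (by positivity)
  have hbound : ∀ v : I, ‖a v.1 * a' (u - v.1)‖ ≤
      (p : ℝ) ^ (-(min b b' * weight n N w (intToReal n u) + c + c')) := by
    intro v
    refine (hterm v).trans (Real.rpow_le_rpow_of_exponent_le hp1.le ?_)
    have hsub := weight_add_le v.2.1 v.2.2
    rw [show intToReal n v.1 + intToReal n (u - v.1) = intToReal n u by
      ext i; simp [intToReal]] at hsub
    have h1 := mul_le_mul_of_nonneg_left hsub (lt_min hb hb').le
    have h2 := mul_le_mul_of_nonneg_right (min_le_left b b')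
      (weight_nonneg n N w (intToReal n v.1))
    have h3 := mul_le_mul_of_nonneg_right (min_le_right b b')
      (weight_nonneg n N w (intToReal n (u - v.1)))
    linarith
  have htend : Filter.Tendsto (fun v : I => a v.1 * a' (u - v.1)) Filter.cofinite (nhds 0) := by
    -- The factor `a' (u - v)` is bounded by `p ^ (-c')`, so the decay of `a v` suffices.
    refine squeeze_zero_norm (a := fun v : I =>
      (p : ℝ) ^ (-(b * weight n N w (intToReal n v.1) + (c + c')))) (fun v => ?_) ?_
    · refine (hterm v).trans (Real.rpow_le_rpow_of_exponent_le hp1.le ?_)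
      have := mul_nonneg hb'.le (weight_nonneg n N w (intToReal n (u - v.1)))
      linarith
    · refine (tendsto_rpow_atBot_of_base_gt_one (p : ℝ) hp1).comp ?_
      refine Filter.tendsto_neg_atTop_atBot.comp ?_
      exact Filter.tendsto_atTop_add_const_right _ _
        ((tendsto_weight_cofinite n N w _ fun v hv => hv.1).const_mul_atTop hb)
  refine ⟨_, (NonarchimedeanAddGroup.summable_of_tendsto_cofinite_zero htend).hasSum, ?_⟩
  exact IsUltrametricDist.norm_tsum_le_of_forall_le_of_nonneg (by positivity) hbound
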